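/- Spectral decomposition for type B (eigenvalue form): let (ε₁,…,ε_n) = (1^κ,0^{n−κ}) with 1 ≤ κ ≤ n−1, let P be the flip P(u⊗v) = v⊗u on 𝒲⊗𝒲, and let φ(z) = Σ_{c≥0} z^c (q²;q²)_c/((q;q)_c)². Then for every l ∈ ℕ the singular vector ξ_l = Σ_{m=0}^{l} (−p)^{−m} q^{m(l−(m+1)/2)} [l choose m] |m·e_n⟩ ⊗ |(l−m)·e_n⟩ is an eigenvector of P ∘ S̃₀^{1,1}(z): (P ∘ S̃₀^{1,1}(z)) ξ_l = φ(z) · ∏_{j=1}^{l} ((z + q^j)/(1 + q^j z)) · ξ_l, as an identity of 𝒲⊗𝒲-valued formal power series in z (each factor (z+q^j)/(1+q^j z) expanded as a power series). -/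

import Mathlib

/-!
Vectors supported on the last (bosonic) component are preserved by the operator, and on them
every local factor of `S₀^{1,1}(z)` except the last one is a Kronecker delta. So only one `R`
matters: the matrix element from `|m e_n⟩ ⊗ |(l-m) e_n⟩` to `|a e_n⟩ ⊗ |(l-a) e_n⟩` has the
coefficient `bdv q l m a c` at `z^c` (`bdCoef_eN`, `S0bd_single`). Because `p² = -q⁻¹`, the
gauge factors cancel all powers of `p` (`xc_gauge`), and the eigenvalue equation becomes the
scalar identity `sum_bdv`:

`∑_m q^{m(m+1)/2} binom(l,m)_{q²} bdv(l,m,a,c) = f_l(c)/(q)_c · q^{b(b+1)/2} binom(l,b)_{q²}`,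
where `b = l - a`.

The numbers `f_N(c)` (`fS`) are defined by `f_0(c) = (q²;q²)_c/(q;q)_c` and
`f_{N+1}(c) = f_N(c+1) - q^{c-N} f_N(c)`. To prove the identity, put `m = μ + s` in the
`R`-sum with summation index `μ`. The three `q²`-binomials form a multinomial
(`qbinom_multinomial`), so the double sum factorises. The sum over `s`, called `hS`, satisfies
a contiguity relation (`hS_rec`) which identifies `(q²;q²)_{c+μ} · hS` with `f_a(c+μ)`
(`fS_eq_hS`). The sum over `μ` is the `q`-binomial expansion of the `b`-fold iterated
recurrence (`fS_add`), and produces `f_{a+b}(c)`.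

Finally, `f_N` satisfies a three-term recurrence in `c` (`fS_three_term`), which says that
multiplying `∑ f_N(c)/(q)_c z^c` by `(z + q^{N+1})/(1 + q^{N+1} z)` gives the same series for
`N + 1`. So this series is `φ(z) ∏_{j ≤ N} (z + q^j)/(1 + q^j z)` (`mkS_fS`).
-/

open scoped BigOperators

set_option synthInstance.maxHeartbeats 1000000
set_option maxHeartbeats 1000000

noncomputable section

namespace TetraGQ

/-! ## Scalar ingredients -/

/-- `(a;qb)_m = ∏_{k=0}^{m-1} (1 - a qb^k)`. -/
def poch (qb a : ℂ) (m : ℕ) : ℂ := ∏ k ∈ Finset.range m, (1 - a * qb ^ k)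

/-- The `q`-binomial `binom(m,k)_qb`, zero unless `k ≤ m`. -/
def qbinom (qb : ℂ) (m k : ℕ) : ℂ :=
  if k ≤ m then poch qb qb m / (poch qb qb k * poch qb qb (m - k)) else 0

/-- `[m] = (q^m - q^{-m})/(q - q^{-1})`. -/
def qnum (q : ℂ) (m : ℕ) : ℂ := (q ^ m - q⁻¹ ^ m) / (q - q⁻¹)

/-- `[m]! = ∏_{k=1}^m [k]`. -/
def qfac (q : ℂ) (m : ℕ) : ℂ := ∏ k ∈ Finset.range m, qnum q (k + 1)

/-- The symmetric `q`-binomial `[m choose k]`, zero unless `k ≤ m`. -/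
def qbin (q : ℂ) (m k : ℕ) : ℂ :=
  if k ≤ m then qfac q m / (qfac q k * qfac q (m - k)) else 0

/-- The 3D `R` matrix entry `R^{a,b,c}_{i,j,k}`. -/
def R3 (q : ℂ) (a b c i j k : ℕ) : ℂ :=
  (if a + b = i + j ∧ b + c = j + k then (1 : ℂ) else 0) *
    ∑ lam ∈ Finset.range (b + 1),
      (-1 : ℂ) ^ lam *
        q ^ ((i : ℤ) * ((c : ℤ) - (j : ℤ)) + ((k : ℤ) + 1) * (lam : ℤ) +
            ((b : ℤ) - (lam : ℤ)) * ((b : ℤ) - (lam : ℤ) - (k : ℤ))) *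
        (poch (q ^ 2) (q ^ 2) (c + (b - lam)) / poch (q ^ 2) (q ^ 2) c) *
        qbinom (q ^ 2) i (b - lam) * qbinom (q ^ 2) j lam

/-- The 3D `L` matrix entry `L^{a,b,c}_{i,j,k}`. -/
def L3 (q : ℂ) (a b c i j k : ℕ) : ℂ :=
  if a = 0 ∧ b = 0 ∧ i = 0 ∧ j = 0 ∧ c = k then 1
  else if a = 1 ∧ b = 1 ∧ i = 1 ∧ j = 1 ∧ c = k then 1
  else if a = 0 ∧ b = 1 ∧ i = 0 ∧ j = 1 ∧ c = k then -q ^ (k + 1)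
  else if a = 1 ∧ b = 0 ∧ i = 1 ∧ j = 0 ∧ c = k then q ^ k
  else if a = 0 ∧ b = 1 ∧ i = 1 ∧ j = 0 ∧ c + 1 = k then 1 - q ^ (2 * k)
  else if a = 1 ∧ b = 0 ∧ i = 0 ∧ j = 1 ∧ c = k + 1 then 1
  else 0

/-- `S^(0) = R`, `S^(1) = L`. -/
def Sg (q : ℂ) (e : Bool) (a b c i j k : ℕ) : ℂ :=
  if e then L3 q a b c i j k else R3 q a b c i j k

/-- Coefficient of `z^{c0}` in the trace solution matrix element
`S₀(z)^{a,b}_{i,j}`. -/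
def trCoef (q : ℂ) {n : ℕ} [NeZero n] (ε : Fin n → Bool) (a b i j : Fin n → ℕ)
    (c0 : ℕ) : ℂ :=
  ∑ᶠ c : Fin n → ℕ,
    if c 0 = c0 then
      ∏ t : Fin n, Sg q (ε t) (a t) (b t) (c t) (i t) (j t) (c (t + 1))
    else 0

/-- Coefficient of `z^{c0}` in the boundary solution matrix element
`S₀^{1,1}(z)^{a,b}_{i,j}`. -/
def bdCoef (q : ℂ) {n : ℕ} (ε : Fin n → Bool) (a b i j : Fin n → ℕ) (c0 : ℕ) : ℂ :=
  ∑ᶠ c : Fin (n + 1) → ℕ,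
    if c 0 = c0 then
      poch (q ^ 2) (q ^ 2) c0 / (poch q q c0 * poch q q (c (Fin.last n))) *
        ∏ t : Fin n, Sg q (ε t) (a t) (b t) (c t.castSucc) (i t) (j t) (c t.succ)
    else 0

/-- Coefficient of `z^{c0}` in the boundary solution matrix element
`S₀^{s,t}(z)^{a,b}_{i,j}`. -/
def bdCoefST (q : ℂ) (s t : ℕ) {n : ℕ} (ε : Fin n → Bool) (a b i j : Fin n → ℕ)
    (c0 : ℕ) : ℂ :=
  ∑ᶠ c : Fin (n + 1) → ℕ,
    if c 0 = c0 then
      poch (q ^ 2) (q ^ 2) (s * c0) /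
          (poch (q ^ s ^ 2) (q ^ s ^ 2) c0 * poch (q ^ t ^ 2) (q ^ t ^ 2) (c (Fin.last n))) *
        ∏ u : Fin n,
          Sg q (ε u) (a u) (b u)
            (if u.castSucc = 0 then s * c0 else c u.castSucc) (i u) (j u)
            (if u.succ = Fin.last n then t * c (Fin.last n) else c u.succ)
    else 0

/-! ## The spaces `𝒲` and `𝒲⊗𝒲` -/

/-- `m` is an admissible occupation vector: at positions with `ε = 1` the entry is `≤ 1`. -/
def Ok {n : ℕ} (ε : Fin n → Bool) (m : Fin n → ℕ) : Prop := ∀ t, ε t = true → m t ≤ 1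

instance {n : ℕ} (ε : Fin n → Bool) : DecidablePred (Ok ε) := fun m =>
  decidable_of_iff (∀ t, ε t = true → m t ≤ 1) Iff.rfl

/-- Basis labels of `𝒲`. -/
def Idx {n : ℕ} (ε : Fin n → Bool) : Type := {m : Fin n → ℕ // Ok ε m}

/-- The space `𝒲` with basis `|m⟩`, over the field `L`. -/
abbrev W (L : Type) [Field L] {n : ℕ} (ε : Fin n → Bool) : Type := Idx ε →₀ L

/-- The space `𝒲 ⊗ 𝒲` with basis `|a⟩⊗|b⟩`, over the field `L`. -/
abbrev WW (L : Type) [Field L] {n : ℕ} (ε : Fin n → Bool) : Type := (Idx ε × Idx ε) →₀ L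

/-- The ket `|m⟩ ∈ 𝒲`; it is `0` if any coordinate is out of range. -/
def ket (L : Type) [Field L] {n : ℕ} (ε : Fin n → Bool) (m : Fin n → ℤ) : W L ε :=
  if h : (∀ t, 0 ≤ m t) ∧ Ok ε (fun t => (m t).toNat) then
    Finsupp.single ⟨fun t => (m t).toNat, h.2⟩ 1
  else 0

/-- The ket `|a⟩⊗|b⟩ ∈ 𝒲⊗𝒲`; it is `0` if any coordinate is out of range. -/
def kk (L : Type) [Field L] {n : ℕ} (ε : Fin n → Bool) (a b : Fin n → ℤ) : WW L ε :=
  if h : ((∀ t, 0 ≤ a t) ∧ Ok ε (fun t => (a t).toNat)) ∧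
      ((∀ t, 0 ≤ b t) ∧ Ok ε (fun t => (b t).toNat)) then
    Finsupp.single (⟨fun t => (a t).toNat, h.1.2⟩, ⟨fun t => (b t).toNat, h.2.2⟩) 1
  else 0

/-- The linear endomorphism of a free module determined by images of basis vectors. -/
def mkEnd (L : Type) [Field L] {α : Type} (v : α → (α →₀ L)) :
    (α →₀ L) →ₗ[L] (α →₀ L) :=
  Finsupp.lsum L fun m => LinearMap.toSpanSingleton L (α →₀ L) (v m)

/-- Product of vectors of `𝒲`, landing in `𝒲⊗𝒲`. -/
def tens (L : Type) [Field L] {n : ℕ} {ε : Fin n → Bool} (u v : W L ε) : WW L ε :=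
  u.sum fun a ca => v.sum fun b cb => Finsupp.single (a, b) (ca * cb)

/-- The operator `A ⊗ B` on `𝒲⊗𝒲`. -/
def opT (L : Type) [Field L] {n : ℕ} {ε : Fin n → Bool}
    (A B : W L ε →ₗ[L] W L ε) : WW L ε →ₗ[L] WW L ε :=
  mkEnd L fun mm => tens L (A (Finsupp.single mm.1 1)) (B (Finsupp.single mm.2 1))

/-- The subspace `𝒲_l ⊗ 𝒲_m` of `𝒲⊗𝒲`. -/
def WWlm (L : Type) [Field L] {n : ℕ} (ε : Fin n → Bool) (l m : ℕ) :
    Submodule L (WW L ε) :=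
  Submodule.span L {v | ∃ p : Idx ε × Idx ε,
    (∑ t, p.1.1 t) = l ∧ (∑ t, p.2.1 t) = m ∧ v = Finsupp.single p 1}

/-- The subspace `𝒲_l` of `𝒲`. -/
def Wl (L : Type) [Field L] {n : ℕ} (ε : Fin n → Bool) (l : ℕ) : Submodule L (W L ε) :=
  Submodule.span L {v | ∃ p : Idx ε, (∑ t, p.1 t) = l ∧ v = Finsupp.single p 1}

/-! ## The scalar field of formal Laurent series in `z` over `ℂ` -/

abbrev K : Type := LaurentSeries ℂ

/-- The power series `Σ_{c≥0} f(c) z^c` as an element of `K`. -/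
def mkS (f : ℕ → ℂ) : K := HahnSeries.ofPowerSeries ℤ ℂ (PowerSeries.mk f)

/-- Constants `ℂ → K`. -/
def cK : ℂ →+* K := HahnSeries.C

/-- The variable `z ∈ K`. -/
def zK : K := mkS fun c => if c = 1 then 1 else 0

/-! ## The solutions of the Yang-Baxter equation -/

/-- The unnormalized trace solution `S₀(z)` acting on `𝒲⊗𝒲`. -/
def S0tr (q : ℂ) {n : ℕ} [NeZero n] (ε : Fin n → Bool) : WW K ε →ₗ[K] WW K ε :=
  mkEnd K fun ij =>
    ∑ a ∈ Fintype.piFinset (fun t => Finset.range (ij.1.1 t + ij.2.1 t + 1)),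
      mkS (trCoef q ε a (fun t => ij.1.1 t + ij.2.1 t - a t) ij.1.1 ij.2.1) •
        kk K ε (fun t => (a t : ℤ)) (fun t => (ij.1.1 t : ℤ) + (ij.2.1 t : ℤ) - (a t : ℤ))

/-- The unnormalized boundary solution `S₀^{1,1}(z)` acting on `𝒲⊗𝒲`. -/
def S0bd (q : ℂ) {n : ℕ} (ε : Fin n → Bool) : WW K ε →ₗ[K] WW K ε :=
  mkEnd K fun ij =>
    ∑ a ∈ Fintype.piFinset (fun t => Finset.range (ij.1.1 t + ij.2.1 t + 1)),
      mkS (bdCoef q ε a (fun t => ij.1.1 t + ij.2.1 t - a t) ij.1.1 ij.2.1) •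
        kk K ε (fun t => (a t : ℤ)) (fun t => (ij.1.1 t : ℤ) + (ij.2.1 t : ℤ) - (a t : ℤ))

/-- The unnormalized boundary solution `S₀^{s,t}(z)` acting on `𝒲⊗𝒲`. -/
def S0bdST (q : ℂ) (s t : ℕ) {n : ℕ} (ε : Fin n → Bool) : WW K ε →ₗ[K] WW K ε :=
  mkEnd K fun ij =>
    ∑ a ∈ Fintype.piFinset (fun u => Finset.range (ij.1.1 u + ij.2.1 u + 1)),
      mkS (bdCoefST q s t ε a (fun u => ij.1.1 u + ij.2.1 u - a u) ij.1.1 ij.2.1) •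
        kk K ε (fun u => (a u : ℤ)) (fun u => (ij.1.1 u : ℤ) + (ij.2.1 u : ℤ) - (a u : ℤ))

/-- The diagonal gauge operator; `Kdiag pc ε s |m⟩ = pc^{s·(m₁+⋯+m_n)} |m⟩`
(`s = -1` gives `K`, `s = 1` gives `K⁻¹`). -/
def Kdiag (pc : ℂ) {n : ℕ} (ε : Fin n → Bool) (s : ℤ) : W K ε →ₗ[K] W K ε :=
  mkEnd K fun m => cK (pc ^ (s * ∑ t, (m.1 t : ℤ))) • Finsupp.single m 1

/-- The gauge transformed boundary solution `S̃₀^{1,1}(z) = (K⊗1) S₀^{1,1}(z) (1⊗K⁻¹)`. -/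
def S0bdT (q pc : ℂ) {n : ℕ} (ε : Fin n → Bool) : WW K ε →ₗ[K] WW K ε :=
  opT K (Kdiag pc ε (-1)) LinearMap.id ∘ₗ S0bd q ε ∘ₗ opT K LinearMap.id (Kdiag pc ε 1)

/-! ## The generalized quantum group actions -/

/-- Value of an occupation vector at a natural-number position. -/
def av {n : ℕ} (m : Fin n → ℕ) (p : ℕ) : ℕ := if h : p < n then m ⟨p, h⟩ else 0

/-- Unit coordinate vector at a natural-number position. -/
def dlt {n : ℕ} (p : ℕ) : Fin n → ℤ := fun t => if (t : ℕ) = p then 1 else 0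

/-- `q_i = q` if `ε_i = 0` and `-q⁻¹` if `ε_i = 1` (0-based positions). -/
def qc (q : ℂ) {n : ℕ} (ε : Fin n → Bool) (p : ℕ) : ℂ :=
  if h : p < n then (if ε ⟨p, h⟩ then -q⁻¹ else q) else q

/-- Type A generator `e_r` of the action `π_x`. -/
def eA (q : ℂ) {L : Type} [Field L] (ι : ℂ →+* L) {n : ℕ} (ε : Fin n → Bool) (x : L)
    (r : Fin n) : W L ε →ₗ[L] W L ε :=
  mkEnd L fun m =>
    (x ^ (if (r : ℕ) = 0 then 1 else 0) * ι (qnum q (av m.1 (((r : ℕ) + n - 1) % n)))) •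
      ket L ε fun t => (m.1 t : ℤ) - dlt (((r : ℕ) + n - 1) % n) t + dlt (r : ℕ) t

/-- Type A generator `f_r` of the action `π_x`. -/
def fA (q : ℂ) {L : Type} [Field L] (ι : ℂ →+* L) {n : ℕ} (ε : Fin n → Bool) (x : L)
    (r : Fin n) : W L ε →ₗ[L] W L ε :=
  mkEnd L fun m =>
    (x ^ (if (r : ℕ) = 0 then (-1 : ℤ) else 0) * ι (qnum q (av m.1 (r : ℕ)))) •
      ket L ε fun t => (m.1 t : ℤ) + dlt (((r : ℕ) + n - 1) % n) t - dlt (r : ℕ) t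

/-- Type A generator `k_r^{s}` (`s = ±1`) of the action `π_x`. -/
def kA (q : ℂ) {L : Type} [Field L] (ι : ℂ →+* L) {n : ℕ} (ε : Fin n → Bool) (s : ℤ)
    (r : Fin n) : W L ε →ₗ[L] W L ε :=
  mkEnd L fun m =>
    ι ((qc q ε (((r : ℕ) + n - 1) % n) ^ (-(av m.1 (((r : ℕ) + n - 1) % n) : ℤ)) *
        qc q ε (r : ℕ) ^ (av m.1 (r : ℕ) : ℤ)) ^ s) • Finsupp.single m 1

/-- Type B generator `e_r` of the action `π_x`. -/
def eB (q : ℂ) {L : Type} [Field L] (ι : ℂ →+* L) {n : ℕ} (ε : Fin n → Bool) (x : L)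
    (r : Fin (n + 1)) : W L ε →ₗ[L] W L ε :=
  mkEnd L fun m =>
    if (r : ℕ) = 0 then x • ket L ε (fun t => (m.1 t : ℤ) + dlt 0 t)
    else if (r : ℕ) = n then
      ι (qnum q (av m.1 (n - 1))) • ket L ε (fun t => (m.1 t : ℤ) - dlt (n - 1) t)
    else
      ι (qnum q (av m.1 ((r : ℕ) - 1))) •
        ket L ε (fun t => (m.1 t : ℤ) - dlt ((r : ℕ) - 1) t + dlt (r : ℕ) t)

/-- Type B generator `f_r` of the action `π_x`. -/
def fB (q : ℂ) {L : Type} [Field L] (ι : ℂ →+* L) {n : ℕ} (ε : Fin n → Bool) (x : L)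
    (r : Fin (n + 1)) : W L ε →ₗ[L] W L ε :=
  mkEnd L fun m =>
    if (r : ℕ) = 0 then
      (x⁻¹ * ι (qnum q (av m.1 0))) • ket L ε (fun t => (m.1 t : ℤ) - dlt 0 t)
    else if (r : ℕ) = n then ket L ε (fun t => (m.1 t : ℤ) + dlt (n - 1) t)
    else
      ι (qnum q (av m.1 (r : ℕ))) •
        ket L ε (fun t => (m.1 t : ℤ) + dlt ((r : ℕ) - 1) t - dlt (r : ℕ) t)

/-- Type B generator `k_r^{s}` (`s = ±1`) of the action `π_x`; `pc = i q^{-1/2}`. -/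
def kB (q pc : ℂ) {L : Type} [Field L] (ι : ℂ →+* L) {n : ℕ} (ε : Fin n → Bool) (s : ℤ)
    (r : Fin (n + 1)) : W L ε →ₗ[L] W L ε :=
  mkEnd L fun m =>
    ι ((if (r : ℕ) = 0 then pc⁻¹ * qc q ε 0 ^ (av m.1 0 : ℤ)
        else if (r : ℕ) = n then pc * qc q ε (n - 1) ^ (-(av m.1 (n - 1) : ℤ))
        else qc q ε ((r : ℕ) - 1) ^ (-(av m.1 ((r : ℕ) - 1) : ℤ)) *
          qc q ε (r : ℕ) ^ (av m.1 (r : ℕ) : ℤ)) ^ s) • Finsupp.single m 1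

/-! ## Coproduct actions on `𝒲⊗𝒲` (type A) -/

/-- `Δ(e_r) = 1⊗e_r + e_r⊗k_r`, with `π_x` on the first factor, `π_y` on the second. -/
def dE (q : ℂ) {L : Type} [Field L] (ι : ℂ →+* L) {n : ℕ} (ε : Fin n → Bool) (x y : L)
    (r : Fin n) : WW L ε →ₗ[L] WW L ε :=
  opT L LinearMap.id (eA q ι ε y r) + opT L (eA q ι ε x r) (kA q ι ε 1 r)

/-- `Δ'(e_r) = e_r⊗1 + k_r⊗e_r`. -/
def dE' (q : ℂ) {L : Type} [Field L] (ι : ℂ →+* L) {n : ℕ} (ε : Fin n → Bool) (x y : L)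
    (r : Fin n) : WW L ε →ₗ[L] WW L ε :=
  opT L (eA q ι ε x r) LinearMap.id + opT L (kA q ι ε 1 r) (eA q ι ε y r)

/-- `Δ(f_r) = f_r⊗1 + k_r⁻¹⊗f_r`. -/
def dF (q : ℂ) {L : Type} [Field L] (ι : ℂ →+* L) {n : ℕ} (ε : Fin n → Bool) (x y : L)
    (r : Fin n) : WW L ε →ₗ[L] WW L ε :=
  opT L (fA q ι ε x r) LinearMap.id + opT L (kA q ι ε (-1) r) (fA q ι ε y r)

/-- `Δ'(f_r) = 1⊗f_r + f_r⊗k_r⁻¹`. -/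
def dF' (q : ℂ) {L : Type} [Field L] (ι : ℂ →+* L) {n : ℕ} (ε : Fin n → Bool) (x y : L)
    (r : Fin n) : WW L ε →ₗ[L] WW L ε :=
  opT L LinearMap.id (fA q ι ε y r) + opT L (fA q ι ε x r) (kA q ι ε (-1) r)

/-- `Δ(k_r^s) = Δ'(k_r^s) = k_r^s ⊗ k_r^s`. -/
def dK (q : ℂ) {L : Type} [Field L] (ι : ℂ →+* L) {n : ℕ} (ε : Fin n → Bool) (s : ℤ)
    (r : Fin n) : WW L ε →ₗ[L] WW L ε :=
  opT L (kA q ι ε s r) (kA q ι ε s r)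

/-! ## Coproduct actions on `𝒲⊗𝒲` (type B) -/

def dEB (q pc : ℂ) {L : Type} [Field L] (ι : ℂ →+* L) {n : ℕ} (ε : Fin n → Bool) (x y : L)
    (r : Fin (n + 1)) : WW L ε →ₗ[L] WW L ε :=
  opT L LinearMap.id (eB q ι ε y r) + opT L (eB q ι ε x r) (kB q pc ι ε 1 r)

def dEB' (q pc : ℂ) {L : Type} [Field L] (ι : ℂ →+* L) {n : ℕ} (ε : Fin n → Bool) (x y : L)
    (r : Fin (n + 1)) : WW L ε →ₗ[L] WW L ε :=
  opT L (eB q ι ε x r) LinearMap.id + opT L (kB q pc ι ε 1 r) (eB q ι ε y r)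

def dFB (q pc : ℂ) {L : Type} [Field L] (ι : ℂ →+* L) {n : ℕ} (ε : Fin n → Bool) (x y : L)
    (r : Fin (n + 1)) : WW L ε →ₗ[L] WW L ε :=
  opT L (fB q ι ε x r) LinearMap.id + opT L (kB q pc ι ε (-1) r) (fB q ι ε y r)

def dFB' (q pc : ℂ) {L : Type} [Field L] (ι : ℂ →+* L) {n : ℕ} (ε : Fin n → Bool) (x y : L)
    (r : Fin (n + 1)) : WW L ε →ₗ[L] WW L ε :=
  opT L LinearMap.id (fB q ι ε y r) + opT L (fB q ι ε x r) (kB q pc ι ε (-1) r)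

def dKB (q pc : ℂ) {L : Type} [Field L] (ι : ℂ →+* L) {n : ℕ} (ε : Fin n → Bool) (s : ℤ)
    (r : Fin (n + 1)) : WW L ε →ₗ[L] WW L ε :=
  opT L (kB q pc ι ε s r) (kB q pc ι ε s r)

/-! ## Structure constants -/

/-- Type A structure constant `D_{i,j}` (as a product over 0-based positions). -/
def DA (q : ℂ) {n : ℕ} (ε : Fin n → Bool) (i j : Fin n) : ℂ :=
  ∏ p ∈ (({((i : ℕ) + n - 1) % n, (i : ℕ)} : Finset ℕ) ∩
      ({((j : ℕ) + n - 1) % n, (j : ℕ)} : Finset ℕ)),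
    qc q ε p ^ (if i = j then (1 : ℤ) else -1)

/-- The set `⟨i⟩ = {i, i+1} ∩ [1,n]` of type B, translated to 0-based positions. -/
def nodeB (n i : ℕ) : Finset ℕ :=
  if i = 0 then {0} else if i = n then {n - 1} else {i - 1, i}

/-- Type B structure constant `D_{i,j}`. -/
def DB (q : ℂ) {n : ℕ} (ε : Fin n → Bool) (i j : Fin (n + 1)) : ℂ :=
  ∏ p ∈ nodeB n (i : ℕ) ∩ nodeB n (j : ℕ), qc q ε p ^ (if i = j then (1 : ℤ) else -1)

/-! ## Distinguished vectors -/

/-- The vector `J_{n,j} = Σ_{i, Σi=j} q^{inv(i)} |i⟩⊗|1-i⟩`. -/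
def Jfull (q : ℂ) {L : Type} [Field L] (ι : ℂ →+* L) {n : ℕ} (ε : Fin n → Bool)
    (j : ℕ) : WW L ε :=
  ∑ i ∈ Fintype.piFinset (fun _ : Fin n => Finset.range 2),
    (if (∑ t, i t) = j then
        ι (q ^ (∑ s : Fin n, ∑ t : Fin n, if s < t then i s * (1 - i t) else 0))
      else 0) •
      kk L ε (fun t => (i t : ℤ)) (fun t => 1 - (i t : ℤ))

/-- Extension of a `Fin s`-tuple to `ℕ` by zero. -/
def ivf {s : ℕ} (i : Fin s → ℕ) : ℕ → ℕ := fun p => if h : p < s then i ⟨p, h⟩ else 0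

/-- `inv(i₁,…,i_s) = Σ_{p<r} i_p (1 - i_r)`. -/
def invv (s : ℕ) (iv : ℕ → ℕ) : ℕ :=
  ∑ p ∈ Finset.range s, ∑ r ∈ Finset.range s, if p < r then iv p * (1 - iv r) else 0

/-- Occupation vector `(0^{nn-s-t}, i₁,…,i_s, 1^t)`. -/
def winA (nn s t : ℕ) (iv : ℕ → ℕ) : Fin nn → ℤ := fun u =>
  if (u : ℕ) < nn - s - t then 0
  else if (u : ℕ) < nn - t then (iv ((u : ℕ) - (nn - s - t)) : ℤ)
  else 1

/-- The singular vector `ξ_t^{l,m}` for `κ = n`. -/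
def xiA (q : ℂ) {L : Type} [Field L] (ι : ℂ →+* L) {n : ℕ} (ε : Fin n → Bool)
    (l m t : ℕ) : WW L ε :=
  ∑ i ∈ Fintype.piFinset (fun _ : Fin (l + m - 2 * t) => Finset.range 2),
    (if (∑ u, i u) = l - t then ι (q ^ invv (l + m - 2 * t) (ivf i)) else 0) •
      kk L ε (winA n (l + m - 2 * t) t (ivf i))
        (winA n (l + m - 2 * t) t (fun p => 1 - ivf i p))

/-- Occupation vector `(0^{nn-s-1}, i₁,…,i_s, last)`. -/
def winA1 (nn s : ℕ) (iv : ℕ → ℕ) (last : ℤ) : Fin nn → ℤ := fun u =>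
  if (u : ℕ) < nn - s - 1 then 0
  else if (u : ℕ) < nn - 1 then (iv ((u : ℕ) - (nn - s - 1)) : ℤ)
  else last

/-- The singular vector `ξ_s^{l,m}` for `κ = n-1`. -/
def xiA1 (q : ℂ) {L : Type} [Field L] (ι : ℂ →+* L) {n : ℕ} (ε : Fin n → Bool)
    (l m s : ℕ) : WW L ε :=
  ∑ j ∈ Finset.range (s + 1),
    ∑ i ∈ Fintype.piFinset (fun _ : Fin s => Finset.range 2),
      (if (∑ u, i u) = s - j then
          ι ((-1 : ℂ) ^ j * q ^ (j * (m - s + 1)) * q ^ invv s (ivf i))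
        else 0) •
        kk L ε (winA1 n s (ivf i) ((l : ℤ) + (j : ℤ) - (s : ℤ)))
          (winA1 n s (fun p => 1 - ivf i p) ((m : ℤ) - (j : ℤ)))

/-- The singular vector `ξ_s^{l,m}` for `0 ≤ κ ≤ n-2`. -/
def xiA2 (q : ℂ) {L : Type} [Field L] (ι : ℂ →+* L) {n : ℕ} (ε : Fin n → Bool)
    (l m s : ℕ) : WW L ε :=
  ∑ j ∈ Finset.range (s + 1),
    ι ((-1 : ℂ) ^ j * q ^ ((j : ℤ) * (2 * (s : ℤ) - (m : ℤ) - (j : ℤ) - 1) + (m : ℤ) * (s : ℤ)) *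
        qbin q s j) •
      kk L ε
        (fun u => if (u : ℕ) < n - 2 then 0
          else if (u : ℕ) = n - 2 then (j : ℤ) else (l : ℤ) - (j : ℤ))
        (fun u => if (u : ℕ) < n - 2 then 0
          else if (u : ℕ) = n - 2 then (s : ℤ) - (j : ℤ) else (m : ℤ) - (s : ℤ) + (j : ℤ))

/-- The type B singular vector `ξ_l`. -/
def xiB (q pc : ℂ) {L : Type} [Field L] (ι : ℂ →+* L) {n : ℕ} (ε : Fin n → Bool)
    (l : ℕ) : WW L ε :=
  ∑ m ∈ Finset.range (l + 1),
    ι ((-pc) ^ (-(m : ℤ)) * q ^ ((m : ℤ) * (l : ℤ) - ((m * (m + 1) / 2 : ℕ) : ℤ)) *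
        qbin q l m) •
      kk L ε (fun u => if (u : ℕ) = n - 1 then (m : ℤ) else 0)
        (fun u => if (u : ℕ) = n - 1 then (l : ℤ) - (m : ℤ) else 0)

/-! ## Miscellany -/

/-- Apply a list of operators, the rightmost element of the list acting first. -/
def appList {L : Type} [Field L] {n : ℕ} {ε : Fin n → Bool}
    (ops : List (WW L ε →ₗ[L] WW L ε)) (v : WW L ε) : WW L ε :=
  ops.foldr (fun A w => A w) v

/-- A natural number as an element of `Fin n`. -/
def mfin {n : ℕ} [NeZero n] (p : ℕ) : Fin n :=
  ⟨p % n, Nat.mod_lt p (Nat.pos_of_ne_zero (NeZero.ne n))⟩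

/-- Reference weight-`l` occupation vector: `(0^{n-l},1^l)` if `κ = n`, `l·e_n` otherwise. -/
def refAN (n κ l : ℕ) : Fin n → ℕ := fun t =>
  if κ = n then (if n - l ≤ (t : ℕ) then 1 else 0) else (if (t : ℕ) = n - 1 then l else 0)

/-- The flip `P(u⊗v) = v⊗u` on `𝒲⊗𝒲`. -/
def Pop (L : Type) [Field L] {n : ℕ} (ε : Fin n → Bool) : WW L ε →ₗ[L] WW L ε :=
  mkEnd L fun p => Finsupp.single (p.2, p.1) 1

/-! ### `q`-binomials and triangular numbers -/

lemma poch_succ (qb a : ℂ) (m : ℕ) : poch qb a (m + 1) = poch qb a m * (1 - a * qb ^ m) := by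
  simp [poch, Finset.prod_range_succ]

lemma poch_zero (qb a : ℂ) : poch qb a 0 = 1 := by simp [poch]

lemma one_sub_ne {Q : ℂ} (hQ : ∀ k : ℕ, k ≠ 0 → Q ^ k ≠ 1) (m : ℕ) : 1 - Q ^ (m + 1) ≠ 0 :=
  sub_ne_zero.2 (hQ (m + 1) (Nat.succ_ne_zero m)).symm

lemma poch_self_ne {Q : ℂ} (hQ : ∀ k : ℕ, k ≠ 0 → Q ^ k ≠ 1) (m : ℕ) : poch Q Q m ≠ 0 := by
  refine Finset.prod_ne_zero_iff.2 fun k _ => ?_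
  rw [← pow_succ']
  exact one_sub_ne hQ k

lemma poch_self_succ (Q : ℂ) (m : ℕ) : poch Q Q (m + 1) = poch Q Q m * (1 - Q ^ (m + 1)) := by
  rw [poch_succ, ← pow_succ']

lemma sq_not_root {q : ℂ} (hq : ∀ k : ℕ, k ≠ 0 → q ^ k ≠ 1) :
    ∀ k : ℕ, k ≠ 0 → (q ^ 2) ^ k ≠ 1 := fun k hk => by
  rw [← pow_mul]
  exact hq _ (by omega)

lemma qbinom_zero {Q : ℂ} (hQ : ∀ k : ℕ, k ≠ 0 → Q ^ k ≠ 1) (m : ℕ) : qbinom Q m 0 = 1 := by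
  have := poch_self_ne hQ m
  simp [qbinom, poch_zero, this]

lemma qbinom_self {Q : ℂ} (hQ : ∀ k : ℕ, k ≠ 0 → Q ^ k ≠ 1) (m : ℕ) : qbinom Q m m = 1 := by
  have := poch_self_ne hQ m
  simp [qbinom, poch_zero, this]

lemma qbinom_of_lt (Q : ℂ) {m k : ℕ} (h : m < k) : qbinom Q m k = 0 := by
  simp [qbinom, Nat.not_le.2 h]

lemma qbinom_add (Q : ℂ) (m k : ℕ) :
    qbinom Q (m + k) k = poch Q Q (m + k) / (poch Q Q k * poch Q Q m) := by
  simp [qbinom]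

/-- The `q`-Pascal rule with the power on the lower term. -/
lemma qbinom_pascal₁ {Q : ℂ} (hQ : ∀ k : ℕ, k ≠ 0 → Q ^ k ≠ 1) (N s : ℕ) :
    qbinom Q (N + 1) (s + 1) = qbinom Q N (s + 1) + Q ^ (N - s) * qbinom Q N s := by
  rcases lt_trichotomy s N with h | rfl | h
  · obtain ⟨d, rfl⟩ : ∃ d, N = d + (s + 1) := ⟨N - (s + 1), by omega⟩
    have e1 : d + (s + 1) + 1 = (d + 1) + (s + 1) := by ring
    have e2 : qbinom Q (d + (s + 1)) s = poch Q Q (d + (s + 1)) / (poch Q Q s * poch Q Q (d + 1)) := by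
      rw [show d + (s + 1) = (d + 1) + s by ring, qbinom_add]
    have e3 : d + (s + 1) - s = d + 1 := by omega
    rw [e2, e3, e1, qbinom_add, qbinom_add, ← e1, poch_self_succ Q (d + (s + 1)),
      poch_self_succ Q d, poch_self_succ Q s]
    have h1 := poch_self_ne hQ d
    have h2 := poch_self_ne hQ s
    have h3 := one_sub_ne hQ d
    have h4 := one_sub_ne hQ s
    field_simp
    ring
  · simp [qbinom_self hQ, qbinom_of_lt Q (Nat.lt_succ_self s)]
  · rw [qbinom_of_lt Q (by omega : N + 1 < s + 1), qbinom_of_lt Q (by omega : N < s + 1),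
      qbinom_of_lt Q h]
    simp

/-- The `q`-Pascal rule with the power on the upper term. -/
lemma qbinom_pascal₂ {Q : ℂ} (hQ : ∀ k : ℕ, k ≠ 0 → Q ^ k ≠ 1) (N s : ℕ) :
    qbinom Q (N + 1) (s + 1) = Q ^ (s + 1) * qbinom Q N (s + 1) + qbinom Q N s := by
  rcases lt_trichotomy s N with h | rfl | h
  · obtain ⟨d, rfl⟩ : ∃ d, N = d + (s + 1) := ⟨N - (s + 1), by omega⟩
    have e1 : d + (s + 1) + 1 = (d + 1) + (s + 1) := by ring
    have e2 : qbinom Q (d + (s + 1)) s = poch Q Q (d + (s + 1)) / (poch Q Q s * poch Q Q (d + 1)) := by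
      rw [show d + (s + 1) = (d + 1) + s by ring, qbinom_add]
    rw [e2, e1, qbinom_add, qbinom_add, ← e1, poch_self_succ Q (d + (s + 1)),
      poch_self_succ Q d, poch_self_succ Q s]
    have h1 := poch_self_ne hQ d
    have h2 := poch_self_ne hQ s
    have h3 := one_sub_ne hQ d
    have h4 := one_sub_ne hQ s
    field_simp
    ring
  · simp [qbinom_self hQ, qbinom_of_lt Q (Nat.lt_succ_self s)]
  · rw [qbinom_of_lt Q (by omega : N + 1 < s + 1), qbinom_of_lt Q (by omega : N < s + 1),
      qbinom_of_lt Q h]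
    simp

lemma one_sub_mul_qbinom {Q : ℂ} (hQ : ∀ k : ℕ, k ≠ 0 → Q ^ k ≠ 1) (N s : ℕ) :
    (1 - Q ^ (s + 1)) * qbinom Q (N + 1) (s + 1) = (1 - Q ^ (N + 1)) * qbinom Q N s := by
  rcases le_or_gt s N with h | h
  · obtain ⟨d, rfl⟩ : ∃ d, N = d + s := ⟨N - s, by omega⟩
    rw [show d + s + 1 = d + (s + 1) by ring, qbinom_add, qbinom_add,
      show d + (s + 1) = d + s + 1 by ring, poch_self_succ Q (d + s), poch_self_succ Q s]
    have h1 := poch_self_ne hQ d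
    have h2 := poch_self_ne hQ s
    have h4 := one_sub_ne hQ s
    field_simp
  · rw [qbinom_of_lt Q (by omega : N + 1 < s + 1), qbinom_of_lt Q h]
    simp

/-- Summation form of `qbinom_pascal₁`. -/
lemma sum_pascal₁ {Q : ℂ} (hQ : ∀ k : ℕ, k ≠ 0 → Q ^ k ≠ 1) (N : ℕ) (g : ℕ → ℂ) :
    ∑ s ∈ Finset.range (N + 2), qbinom Q (N + 1) s * g s =
      ∑ s ∈ Finset.range (N + 1), qbinom Q N s * (g s + Q ^ (N - s) * g (s + 1)) := by
  rw [Finset.sum_range_succ']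
  simp only [qbinom_pascal₁ hQ, mul_add, add_mul, Finset.sum_add_distrib]
  rw [qbinom_zero hQ, Finset.sum_range_succ' (fun s => qbinom Q N s * g s), qbinom_zero hQ,
    Finset.sum_range_succ (fun s => qbinom Q N (s + 1) * g (s + 1)),
    qbinom_of_lt Q (Nat.lt_succ_self N)]
  have h1 (x : ℕ) : Q ^ (N - x) * qbinom Q N x * g (x + 1) =
      qbinom Q N x * (Q ^ (N - x) * g (x + 1)) := by ring
  simp only [h1]
  ring

/-- Summation form of `qbinom_pascal₂`. -/
lemma sum_pascal₂ {Q : ℂ} (hQ : ∀ k : ℕ, k ≠ 0 → Q ^ k ≠ 1) (N : ℕ) (g : ℕ → ℂ) :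
    ∑ s ∈ Finset.range (N + 2), qbinom Q (N + 1) s * g s =
      ∑ s ∈ Finset.range (N + 1), qbinom Q N s * (Q ^ s * g s + g (s + 1)) := by
  rw [Finset.sum_range_succ']
  simp only [qbinom_pascal₂ hQ, mul_add, add_mul, Finset.sum_add_distrib]
  rw [qbinom_zero hQ, Finset.sum_range_succ' (fun s => qbinom Q N s * (Q ^ s * g s)),
    qbinom_zero hQ,
    Finset.sum_range_succ (fun s => Q ^ (s + 1) * qbinom Q N (s + 1) * g (s + 1)),
    qbinom_of_lt Q (Nat.lt_succ_self N)]
  have h1 (x : ℕ) : Q ^ (x + 1) * qbinom Q N (x + 1) * g (x + 1) =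
      qbinom Q N (x + 1) * (Q ^ (x + 1) * g (x + 1)) := by ring
  simp only [h1]
  ring

/-- Both sides are the `q`-multinomial of `l = b + N` with parts `μ, s, b - μ, N - s`. -/
lemma qbinom_multinomial {Q : ℂ} (hQ : ∀ k : ℕ, k ≠ 0 → Q ^ k ≠ 1) {b N μ s : ℕ}
    (hμ : μ ≤ b) (hs : s ≤ N) :
    qbinom Q (b + N) (μ + s) * qbinom Q (μ + s) μ * qbinom Q (b + N - (μ + s)) (b - μ) =
      qbinom Q (b + N) b * qbinom Q b μ * qbinom Q N s := by
  obtain ⟨d, rfl⟩ : ∃ d, b = d + μ := ⟨b - μ, by omega⟩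
  obtain ⟨r, rfl⟩ : ∃ r, N = r + s := ⟨N - s, by omega⟩
  have a1 : d + μ + (r + s) = d + r + (μ + s) := by ring
  have a2 : d + μ + (r + s) = r + s + (d + μ) := by ring
  have a3 : d + μ + (r + s) - (μ + s) = r + d := by omega
  have a4 : d + μ - μ = d := by omega
  rw [a3, a4, qbinom_add Q d, qbinom_add Q r s, qbinom_add Q r d, add_comm μ s, qbinom_add Q s μ,
    add_comm s μ]
  nth_rewrite 1 [a1]
  rw [a2, qbinom_add, qbinom_add, ← a2, ← a1, add_comm r d]
  have h1 := poch_self_ne hQ d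
  have h2 := poch_self_ne hQ s
  have h3 := poch_self_ne hQ r
  have h4 := poch_self_ne hQ μ
  have h5 := poch_self_ne hQ (d + r)
  have h6 := poch_self_ne hQ (μ + s)
  have h7 := poch_self_ne hQ (d + μ)
  have h8 := poch_self_ne hQ (r + s)
  field_simp

/-- The triangular number `m (m + 1) / 2`, as an integer. -/
def tri (m : ℕ) : ℤ := ((m * (m + 1) / 2 : ℕ) : ℤ)

lemma two_mul_tri (m : ℕ) : 2 * tri m = m * (m + 1) := by
  unfold tri
  have := Nat.div_mul_cancel (Nat.even_mul_succ_self m).two_dvd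
  rw [mul_comm]
  exact_mod_cast this

lemma tri_succ (m : ℕ) : tri (m + 1) = tri m + m + 1 := by
  have h1 := two_mul_tri m
  have h2 := two_mul_tri (m + 1)
  push_cast at h2
  linarith

lemma tri_zero : tri 0 = 0 := rfl

lemma tri_add (m k : ℕ) : tri (m + k) = tri m + tri k + m * k := by
  have h1 := two_mul_tri m
  have h2 := two_mul_tri k
  have h3 := two_mul_tri (m + k)
  push_cast at h3
  linarith

/-! ### The scalar sequences -/

/-- `1 / (q; q)_k` for an integer `k`, with the usual value `0` at negative `k`. -/
def ipf (q : ℂ) (k : ℤ) : ℂ := if 0 ≤ k then (poch q q k.toNat)⁻¹ else 0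

lemma ipf_nat (q : ℂ) (k : ℕ) : ipf q (k : ℤ) = (poch q q k)⁻¹ := by simp [ipf]

lemma ipf_neg (q : ℂ) {k : ℤ} (h : k < 0) : ipf q k = 0 := by simp [ipf, h]

lemma ipf_rec {q : ℂ} (hq : ∀ k : ℕ, k ≠ 0 → q ^ k ≠ 1) (k : ℤ) :
    ipf q k = (1 - q ^ (k + 1)) * ipf q (k + 1) := by
  rcases le_or_gt 0 k with h | h
  · obtain ⟨m, rfl⟩ := Int.eq_ofNat_of_zero_le h
    have e : (m : ℤ) + 1 = ((m + 1 : ℕ) : ℤ) := by push_cast; ring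
    rw [e, ipf_nat, ipf_nat, zpow_natCast, poch_self_succ]
    have h1 := poch_self_ne hq m
    have h2 := one_sub_ne hq m
    field_simp
  · rcases eq_or_ne k (-1) with rfl | h'
    · simp [ipf_neg]
    · rw [ipf_neg q h, ipf_neg q (by omega : k + 1 < 0), mul_zero]

/-- The sum over the first index of `R` left after the `R`-sum has been factorised. -/
def hS (q : ℂ) (N : ℕ) (x : ℤ) : ℂ :=
  ∑ s ∈ Finset.range (N + 1),
    qbinom (q ^ 2) N s * (q ^ (tri s + s * s + s * x) * ipf q (x + s))

lemma sq_pow_eq_zpow (q : ℂ) (m : ℕ) : (q ^ 2) ^ m = q ^ (2 * (m : ℤ)) := by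
  rw [← pow_mul, ← zpow_natCast]
  push_cast
  rfl

/-- Pascal's rule for `binom(N+1,s)_{q²}` followed by `ipf_rec`, which merges the two terms. -/
lemma hS_shift {q : ℂ} (hq0 : q ≠ 0) (hq : ∀ k : ℕ, k ≠ 0 → q ^ k ≠ 1) (N : ℕ) (x : ℤ) :
    ∑ s ∈ Finset.range (N + 2),
        qbinom (q ^ 2) (N + 1) s * (q ^ (tri s + s * s + s * x) * ipf q (x + s + 1)) =
      ∑ s ∈ Finset.range (N + 1),
        qbinom (q ^ 2) N s * (q ^ (tri s + s * s + s * x + 2 * s) * ipf q (x + s + 2)) := by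
  rw [sum_pascal₂ (sq_not_root hq) N]
  refine Finset.sum_congr rfl fun s _ => ?_
  rw [ipf_rec hq (x + s + 1), sq_pow_eq_zpow, tri_succ]
  push_cast
  have e1 : tri s + s + 1 + ((s : ℤ) + 1) * (s + 1) + (s + 1) * x =
    (tri s + s * s + s * x) + 2 * s + (x + s + 1 + 1) := by ring
  have e2 : x + (s + 1) + 1 = x + s + 2 := by ring
  have e3 : x + s + 1 + 1 = x + s + 2 := by ring
  rw [e1, e2, e3]
  simp only [zpow_add₀ hq0]
  ring

/-- The contiguity relation of `hS`. After `sum_pascal₁` the difference of the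
two sides is
`∑ binom(N,s)_{q²} q^{…} ((1 - q^{2s}) - q^{x+s+1} (1 - q^{2N})) / (q)_{x+s+1}`,
which vanishes by `hS_shift`. -/
lemma hS_rec {q : ℂ} (hq0 : q ≠ 0) (hq : ∀ k : ℕ, k ≠ 0 → q ^ k ≠ 1) (N : ℕ) (x : ℤ) :
    hS q (N + 1) (x - 1) =
      (1 - q ^ (2 * x + 2 * N + 2)) * hS q N (x + 1) - q ^ x * hS q N x := by
  have hQ := sq_not_root hq
  have key : ∑ s ∈ Finset.range (N + 1), qbinom (q ^ 2) N s *
      (q ^ (tri s + s * s + s * (x - 1)) * ipf q (x + s + 1) *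
        ((1 - (q ^ 2) ^ s) - q ^ (x + s + 1) * (1 - (q ^ 2) ^ N))) = 0 := by
    rcases N with _ | N
    · simp
    -- `(1 - q^{2s}) binom(N+1,s)_{q²} = (1 - q^{2N+2}) binom(N,s-1)_{q²}` moves the first part
    -- of the sum onto `binom(N, ·)_{q²}`, where `hS_shift` also puts the second part.
    have h := hS_shift hq0 hq N x
    have h' : ∀ s : ℕ, qbinom (q ^ 2) (N + 1) s *
        (q ^ (tri s + s * s + s * (x - 1)) * ipf q (x + s + 1) *
          ((1 - (q ^ 2) ^ s) - q ^ (x + s + 1) * (1 - (q ^ 2) ^ (N + 1)))) =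
        ((1 - (q ^ 2) ^ s) * qbinom (q ^ 2) (N + 1) s) *
          (q ^ (tri s + s * s + s * (x - 1)) * ipf q (x + s + 1)) -
        (q ^ (x + 1) * (1 - (q ^ 2) ^ (N + 1))) * (qbinom (q ^ 2) (N + 1) s *
          (q ^ (tri s + s * s + s * x) * ipf q (x + s + 1))) := by
      intro s
      have e : tri s + s * s + s * (x - 1) = (tri s + s * s + s * x) - s := by ring
      have e' : x + s + 1 = x + 1 + s := by ring
      have e'' : q ^ (tri s + s * s + s * x) =
          q ^ (tri s + s * s + s * (x - 1)) * q ^ (s : ℤ) := by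
        rw [← zpow_add₀ hq0]; congr 1; ring
      rw [e'', e', zpow_add₀ hq0 (x + 1) s]
      ring
    rw [Finset.sum_congr rfl fun s _ => h' s, Finset.sum_sub_distrib, ← Finset.mul_sum, h,
      Finset.sum_range_succ']
    simp only [pow_zero, sub_self, zero_mul, add_zero, one_sub_mul_qbinom hQ]
    rw [Finset.mul_sum, ← Finset.sum_sub_distrib]
    refine Finset.sum_eq_zero fun s _ => ?_
    rw [tri_succ]
    push_cast
    have e1 : tri s + s + 1 + ((s : ℤ) + 1) * (s + 1) + (s + 1) * (x - 1) =
      (x + 1) + (tri s + s * s + s * x + 2 * s) := by ring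
    have e2 : x + (s + 1) + 1 = x + s + 2 := by ring
    rw [e1, e2, zpow_add₀ hq0 (x + 1)]
    ring
  rw [← sub_eq_zero, ← key]
  unfold hS
  rw [sum_pascal₁ hQ N, Finset.mul_sum, Finset.mul_sum, ← Finset.sum_sub_distrib,
    ← Finset.sum_sub_distrib]
  refine Finset.sum_congr rfl fun s hs => ?_
  have hs' : s ≤ N := Nat.lt_succ_iff.1 (Finset.mem_range.1 hs)
  have eQ : (q ^ 2) ^ (N - s) = q ^ (2 * (N : ℤ) - 2 * s) := by
    rw [sq_pow_eq_zpow]; congr 1; push_cast [Nat.cast_sub hs']; ring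
  rw [eQ, sq_pow_eq_zpow, sq_pow_eq_zpow, tri_succ]
  push_cast
  have i1 : x - 1 + (s : ℤ) = x + s - 1 := by ring
  have i2 : x - 1 + ((s : ℤ) + 1) = x + s := by ring
  have i3 : x + 1 + (s : ℤ) = x + s + 1 := by ring
  rw [i1, i2, i3, ipf_rec hq (x + s - 1), sub_add_cancel, ipf_rec hq (x + s)]
  have j1 : tri s + s + 1 + ((s : ℤ) + 1) * (s + 1) + (s + 1) * (x - 1) =
    (tri s + s * s + s * (x - 1)) + (x + s) + s + s + 1 := by ring
  have j2 : tri s + s * s + (s : ℤ) * (x + 1) = (tri s + s * s + s * (x - 1)) + s + s := by ring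
  have j3 : tri s + s * s + (s : ℤ) * x = (tri s + s * s + s * (x - 1)) + s := by ring
  have j4 : (2 * x + 2 * N + 2 : ℤ) = (x + s) + (x + s) + (2 * N - 2 * s) + 1 + 1 := by ring
  have j5 : q ^ (2 * (N : ℤ)) = q ^ (2 * (N : ℤ) - 2 * s) * q ^ (s : ℤ) * q ^ (s : ℤ) := by
    rw [← zpow_add₀ hq0, ← zpow_add₀ hq0]; congr 1; ring
  have j6 : q ^ (x + (s : ℤ)) = q ^ x * q ^ (s : ℤ) := zpow_add₀ hq0 _ _
  have j7 : q ^ (2 * (s : ℤ)) = q ^ (s : ℤ) * q ^ (s : ℤ) := by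
    rw [← zpow_add₀ hq0]; congr 1; ring
  rw [j1, j2, j3, j4, j5, j7]
  generalize tri s + s * s + (s : ℤ) * (x - 1) = A
  generalize 2 * (N : ℤ) - 2 * s = B
  simp only [zpow_add₀ hq0, zpow_one]
  ring

/-- The numerators `f_N(c)` of the eigenvalue series
`φ(z) ∏_{j ≤ N} (z + q^j) / (1 + q^j z) = ∑ f_N(c) / (q;q)_c z^c`, given through their
recurrence in `N`. -/
def fS (q : ℂ) : ℕ → ℕ → ℂ
  | 0, c => poch (q ^ 2) (q ^ 2) c / poch q q c
  | N + 1, c => fS q N (c + 1) - q ^ ((c : ℤ) - N) * fS q N c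

/-- The closed form of `f_N(c)`; the recurrence of `fS` becomes `hS_rec` at `x = c - N`. -/
lemma fS_eq_hS {q : ℂ} (hq0 : q ≠ 0) (hq : ∀ k : ℕ, k ≠ 0 → q ^ k ≠ 1) (N c : ℕ) :
    fS q N c = poch (q ^ 2) (q ^ 2) c * hS q N ((c : ℤ) - N) := by
  induction N generalizing c with
  | zero => simp [fS, hS, ipf_nat, qbinom_zero (sq_not_root hq), tri_zero, div_eq_mul_inv]
  | succ N ih =>
    rw [fS, ih, ih, poch_self_succ, sq_pow_eq_zpow]
    have h := hS_rec hq0 hq N ((c : ℤ) - N)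
    have e1 : (c : ℤ) - ((N + 1 : ℕ) : ℤ) = c - N - 1 := by push_cast; ring
    have e2 : ((c + 1 : ℕ) : ℤ) - N = c - N + 1 := by push_cast; ring
    have e3 : 2 * ((c : ℤ) - N) + 2 * N + 2 = 2 * ((c + 1 : ℕ) : ℤ) := by push_cast; ring
    rw [e1, e2, h, e3]
    ring

/-- Iterating the recurrence of `fS` in `N` gives a `q`-binomial expansion. -/
lemma fS_add {q : ℂ} (hq0 : q ≠ 0) (hq : ∀ k : ℕ, k ≠ 0 → q ^ k ≠ 1) (N b c : ℕ) :
    fS q (N + b) c =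
      ∑ μ ∈ Finset.range (b + 1), qbinom (q ^ 2) b μ *
        ((-1) ^ (b + μ) *
          q ^ (((μ * μ + tri μ - μ) + (c + μ - N) * (b - μ) - μ * b + b - tri b : ℤ)) *
          fS q N (c + μ)) := by
  have hQ := sq_not_root hq
  induction b generalizing c with
  | zero => simp [qbinom_zero hQ, tri_zero]
  | succ b ih =>
    rw [← Nat.add_assoc, fS, ih, ih, sum_pascal₁ hQ b, Finset.mul_sum, ← Finset.sum_sub_distrib]
    refine Finset.sum_congr rfl fun μ hμ => ?_
    have hμ' : μ ≤ b := Nat.lt_succ_iff.1 (Finset.mem_range.1 hμ)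
    have eQ : (q ^ 2) ^ (b - μ) = q ^ (2 * (b : ℤ) - 2 * μ) := by
      rw [sq_pow_eq_zpow]; congr 1; push_cast [Nat.cast_sub hμ']; ring
    rw [eQ, tri_succ, tri_succ, show c + 1 + μ = c + (μ + 1) by ring]
    push_cast
    have s1 : (-1 : ℂ) ^ (b + 1 + (μ + 1)) = (-1) ^ (b + μ) := by
      rw [show b + 1 + (μ + 1) = b + μ + 2 by ring, pow_add]; norm_num
    have s2 : (-1 : ℂ) ^ (b + 1 + μ) = - (-1) ^ (b + μ) := by
      rw [show b + 1 + μ = b + μ + 1 by ring, pow_succ]; ring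
    rw [s1, s2]
    have p1 : q ^ (((μ + 1) * (μ + 1) + (tri μ + μ + 1) - (μ + 1) +
          (c + (μ + 1) - N) * (b + 1 - (μ + 1)) - (μ + 1) * (b + 1) + (b + 1) -
          (tri b + b + 1) : ℤ)) * q ^ (2 * (b : ℤ) - 2 * μ) =
        q ^ ((μ * μ + tri μ - μ + (c + 1 + μ - N) * (b - μ) - μ * b + b - tri b : ℤ)) := by
      rw [← zpow_add₀ hq0]; congr 1; ring
    have p2 : q ^ ((μ * μ + tri μ - μ + (c + μ - N) * (b + 1 - μ) - μ * (b + 1) + (b + 1) -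
          (tri b + b + 1) : ℤ)) =
        q ^ ((c : ℤ) - (N + b)) *
          q ^ ((μ * μ + tri μ - μ + (c + μ - N) * (b - μ) - μ * b + b - tri b : ℤ)) := by
      rw [← zpow_add₀ hq0]; congr 1; ring
    rw [p2, ← p1]
    ring

/-- The recurrence of `f_N(c)` in `c` alone. It holds for `N = 0` directly and is carried from
`N` to `N + 1` by the recurrence defining `fS`. At `c = 0` the truncated `c - 1` is harmless,
as the factor in front of that term is `0`. -/
lemma fS_three_term {q : ℂ} (hq0 : q ≠ 0) (hq : ∀ k : ℕ, k ≠ 0 → q ^ k ≠ 1) (N c : ℕ) :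
    fS q N (c + 1) = q ^ (c : ℤ) * (q ^ (-(N : ℤ)) + q ^ ((N : ℤ) + 1)) * fS q N c +
      (1 - q ^ (2 * (c : ℤ))) * fS q N (c - 1) := by
  induction N generalizing c with
  | zero =>
    have h0 (m : ℕ) : fS q 0 (m + 1) = (1 + q ^ (m + 1)) * fS q 0 m := by
      simp only [fS, poch_self_succ]
      have h1 := poch_self_ne hq m
      have h2 := one_sub_ne hq m
      field_simp
      ring
    rcases c with _ | c
    · rw [h0]; simp
    · rw [h0, Nat.add_sub_cancel, h0 c, ← sq_pow_eq_zpow, zpow_natCast]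
      simp only [Nat.cast_zero, neg_zero, zpow_zero, zero_add, zpow_one]
      ring
  | succ N ih =>
    have a1 := ih (c + 1)
    have a2 := ih c
    simp only [Nat.add_sub_cancel] at a1
    have v : q ^ (N : ℤ) ≠ 0 := zpow_ne_zero _ hq0
    rcases c with _ | c
    · simp only [fS]
      simp only [zero_add] at a1 a2 ⊢
      push_cast at a1 a2 ⊢
      rw [a1, a2]
      simp only [zpow_add₀ hq0, zpow_sub₀ hq0, zpow_neg, neg_add, mul_add,
        zpow_one, zpow_zero, sub_self, zero_mul, mul_zero]
      field_simp
      ring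
    · simp only [fS, Nat.add_sub_cancel] at a2 ⊢
      push_cast at a1 a2 ⊢
      have w : q ^ (c : ℤ) ≠ 0 := zpow_ne_zero _ hq0
      have t (m : ℤ) : q ^ (2 * m) = q ^ m * q ^ m := by rw [← zpow_add₀ hq0]; congr 1; ring
      simp only [t, zpow_add₀ hq0, zpow_sub₀ hq0, zpow_neg, zpow_one] at a1 a2 ⊢
      generalize q ^ (c : ℤ) = C at *
      generalize q ^ (N : ℤ) = M at *
      rw [a1, a2]
      field_simp
      ring

/-! ### The matrix elements on the last tensor component -/

/-- The coefficient of `z^c` in the matrix element of `S₀^{1,1}(z)` from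
`|m e_n⟩ ⊗ |(l-m) e_n⟩` to `|a e_n⟩ ⊗ |(l-a) e_n⟩`. The truncated subtraction `c + m - a` is
harmless: when it truncates, the conservation law in `R3` fails and the value is `0`. -/
def bdv (q : ℂ) (l m a c : ℕ) : ℂ :=
  poch (q ^ 2) (q ^ 2) c / (poch q q c * poch q q (c + m - a)) *
    R3 q a (l - a) c m (l - m) (c + m - a)

/-- The `R`-sum with the summation index `λ` replaced by `μ = b - λ`; here `l = b + N` and
`a = N`, so that `R` carries the upper label `b = l - a`. -/
lemma bdv_eq {q : ℂ} (hq : ∀ k : ℕ, k ≠ 0 → q ^ k ≠ 1) {N b m : ℕ} (c : ℕ) (hm : m ≤ b + N) :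
    bdv q (b + N) m N c = ∑ μ ∈ Finset.range (b + 1),
      poch (q ^ 2) (q ^ 2) (c + μ) / poch q q c * ipf q (c + m - N) * (-1) ^ (b + μ) *
        q ^ ((m * (c - (b + N - m)) + (c + m - N + 1) * (b - μ) + μ * (μ - (c + m - N)) : ℤ)) *
        (qbinom (q ^ 2) m μ * qbinom (q ^ 2) (b + N - m) (b - μ)) := by
  unfold bdv R3
  rcases lt_or_ge (c + m) N with h | h
  · rw [if_neg (by omega)]
    simp [ipf_neg q (by omega : (c : ℤ) + m - N < 0)]
  · rw [if_pos (by omega), one_mul, Finset.mul_sum, ← Finset.sum_range_reflect,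
      Nat.add_sub_cancel]
    refine Finset.sum_congr rfl fun μ hμ => ?_
    have hμ' : μ ≤ b := Nat.lt_succ_iff.1 (Finset.mem_range.1 hμ)
    have e1 : b + 1 - 1 - μ = b - μ := by omega
    have e2 : b - (b - μ) = μ := by omega
    have e3 : (c : ℤ) + m - N = ((c + m - N : ℕ) : ℤ) := by omega
    have s1 : (-1 : ℂ) ^ (b - μ) = (-1) ^ (b + μ) := by
      rw [show b + μ = b - μ + 2 * μ by omega, pow_add, pow_mul]; norm_num
    have e4 : (m : ℤ) * (c - ((b + N - m : ℕ) : ℤ)) +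
        (((c + m - N : ℕ) : ℤ) + 1) * ((b - μ : ℕ) : ℤ) +
        (b - ((b - μ : ℕ) : ℤ)) * (b - ((b - μ : ℕ) : ℤ) - ((c + m - N : ℕ) : ℤ)) =
        m * (c - (b + N - m)) + (((c + m - N : ℕ) : ℤ) + 1) * (b - μ) +
          μ * (μ - ((c + m - N : ℕ) : ℤ)) := by
      rw [Nat.cast_sub hμ', Nat.cast_sub hm]; push_cast; ring
    rw [e1, e2, e3, ipf_nat, s1, e4]
    have h1 := poch_self_ne (sq_not_root hq) c
    have h2 := poch_self_ne hq c
    have h3 := poch_self_ne hq (c + m - N)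
    field_simp

lemma sum_range_shift (F : ℕ → ℂ) {b N μ : ℕ} (hμ : μ ≤ b) (h1 : ∀ m < μ, F m = 0)
    (h2 : ∀ m, μ + N < m → m ≤ b + N → F m = 0) :
    ∑ m ∈ Finset.range (b + N + 1), F m = ∑ s ∈ Finset.range (N + 1), F (μ + s) := by
  rw [show b + N + 1 = μ + (N + 1) + (b - μ) by omega, Finset.sum_range_add, Finset.sum_range_add,
    Finset.sum_eq_zero fun m hm => h1 m (Finset.mem_range.1 hm),
    Finset.sum_eq_zero fun x hx => h2 (μ + (N + 1) + x) (by omega) (by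
      have := Finset.mem_range.1 hx
      omega), zero_add, add_zero]

/-- The coefficient form of the eigenvalue equation, on the gauge-free vector with entries
`q^{m(m+1)/2} binom(l,m)_{q²}`. -/
lemma sum_bdv {q : ℂ} (hq0 : q ≠ 0) (hq : ∀ k : ℕ, k ≠ 0 → q ^ k ≠ 1) (N b c : ℕ) :
    ∑ m ∈ Finset.range (b + N + 1), q ^ tri m * qbinom (q ^ 2) (b + N) m * bdv q (b + N) m N c =
      fS q (b + N) c / poch q q c * (q ^ tri b * qbinom (q ^ 2) (b + N) b) := by
  have hQ := sq_not_root hq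
  rw [Finset.sum_congr rfl fun m hm => by
    rw [bdv_eq hq c (Nat.lt_succ_iff.1 (Finset.mem_range.1 hm)), Finset.mul_sum],
    Finset.sum_comm, add_comm b N, fS_add hq0 hq, Finset.sum_div, Finset.sum_mul, add_comm N b]
  refine Finset.sum_congr rfl fun μ hμ => ?_
  have hμ' : μ ≤ b := Nat.lt_succ_iff.1 (Finset.mem_range.1 hμ)
  -- For fixed `μ` only `m = μ + s` with `0 ≤ s ≤ N` contributes.
  rw [sum_range_shift _ hμ', fS_eq_hS hq0 hq, hS]
  rotate_left
  · intro m hm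
    rw [qbinom_of_lt _ hm]
    ring
  · intro m hm hm'
    rw [qbinom_of_lt _ (by omega : b + N - m < b - μ)]
    ring
  simp only [Finset.mul_sum, Finset.sum_div, Finset.sum_mul]
  refine Finset.sum_congr rfl fun s hs => ?_
  have hs' : s ≤ N := Nat.lt_succ_iff.1 (Finset.mem_range.1 hs)
  have hm := qbinom_multinomial hQ hμ' hs'
  have e1 : (c : ℤ) + ((μ + s : ℕ) : ℤ) - N = c + μ - N + s := by push_cast; ring
  have e2 : ((c + μ : ℕ) : ℤ) - N = c + μ - N := by push_cast; ring
  rw [e1, e2]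
  have p1 : q ^ tri (μ + s) * q ^ ((((μ + s : ℕ) : ℤ) * (c - (b + N - ((μ + s : ℕ) : ℤ))) +
      (c + μ - N + s + 1) * (b - μ) + μ * (μ - (c + μ - N + s)) : ℤ)) =
      q ^ ((μ * μ + tri μ - μ + (c + μ - N) * (b - μ) - μ * b + b - tri b : ℤ)) *
        q ^ (tri s + s * s + s * (c + μ - N)) * q ^ tri b := by
    rw [← zpow_add₀ hq0, ← zpow_add₀ hq0, ← zpow_add₀ hq0, tri_add]
    congr 1
    push_cast
    ring
  generalize ipf q (c + μ - N + s) = U at *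
  generalize (-1 : ℂ) ^ (b + μ) = σ
  generalize poch q q c = P
  generalize poch (q ^ 2) (q ^ 2) (c + μ) = P'
  linear_combination (P' / P * U * σ * qbinom (q ^ 2) (b + N) (μ + s) * qbinom (q ^ 2) (μ + s) μ *
    qbinom (q ^ 2) (b + N - (μ + s)) (b - μ)) * p1 +
    (P' / P * U * σ *
      (q ^ ((μ * μ + tri μ - μ + (c + μ - N) * (b - μ) - μ * b + b - tri b : ℤ)) *
        q ^ (tri s + s * s + s * (c + μ - N)) * q ^ tri b)) * hm

/-! ### The coefficients of the singular vector -/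

lemma qfac_eq {q : ℂ} (hq0 : q ≠ 0) (hq : ∀ k : ℕ, k ≠ 0 → q ^ k ≠ 1) (m : ℕ) :
    qfac q m = q ^ ((m : ℤ) - tri m) * poch (q ^ 2) (q ^ 2) m / (1 - q ^ 2) ^ m := by
  have h1 : 1 - q ^ 2 ≠ 0 := sub_ne_zero.2 (hq 2 (by norm_num)).symm
  induction m with
  | zero => simp [qfac, poch_zero, tri_zero]
  | succ m ih =>
    have hr : qnum q (m + 1) = q ^ (-(m : ℤ)) * ((1 - (q ^ 2) ^ (m + 1)) / (1 - q ^ 2)) := by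
      have h2 : q - q⁻¹ ≠ 0 := by
        intro h
        field_simp at h
        exact h1 (by linear_combination -h)
      have h3 : q ^ m ≠ 0 := pow_ne_zero _ hq0
      unfold qnum
      have h4 : (q ^ 2) ^ (m + 1) = q ^ m * q ^ m * q ^ 2 := by ring
      rw [zpow_neg, zpow_natCast, ← mul_div_assoc, div_eq_div_iff h2 h1, inv_pow, h4, pow_succ q m]
      field_simp
      ring
    have hf : qfac q (m + 1) = qfac q m * qnum q (m + 1) := by
      simp [qfac, Finset.prod_range_succ]
    rw [hf, ih, hr, poch_self_succ, tri_succ]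
    have e : ((m + 1 : ℕ) : ℤ) - (tri m + m + 1) = (m - tri m) + -(m : ℤ) := by push_cast; ring
    rw [e, zpow_add₀ hq0]
    field_simp
    ring

lemma qbin_eq {q : ℂ} (hq0 : q ≠ 0) (hq : ∀ k : ℕ, k ≠ 0 → q ^ k ≠ 1) {l m : ℕ} (h : m ≤ l) :
    qbin q l m = q ^ (-((m : ℤ) * (l - m))) * qbinom (q ^ 2) l m := by
  obtain ⟨r, rfl⟩ : ∃ r, l = r + m := ⟨l - m, by omega⟩
  have h1 : 1 - q ^ 2 ≠ 0 := sub_ne_zero.2 (hq 2 (by norm_num)).symm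
  rw [qbinom_add, qbin, if_pos h, Nat.add_sub_cancel, qfac_eq hq0 hq, qfac_eq hq0 hq,
    qfac_eq hq0 hq, tri_add]
  have e : ((r + m : ℕ) : ℤ) - (tri r + tri m + r * m) =
      (m - tri m) + (r - tri r) + -((m : ℤ) * (((r + m : ℕ) : ℤ) - m)) := by push_cast; ring
  have h2 := poch_self_ne (sq_not_root hq) r
  have h3 := poch_self_ne (sq_not_root hq) m
  have h4 : q ^ ((m : ℤ) - tri m) ≠ 0 := zpow_ne_zero _ hq0
  have h5 : q ^ ((r : ℤ) - tri r) ≠ 0 := zpow_ne_zero _ hq0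
  rw [e, zpow_add₀ hq0, zpow_add₀ hq0, pow_add]
  field_simp

/-- The coefficient of `|m e_n⟩ ⊗ |(l-m) e_n⟩` in `ξ_l`. -/
def xc (q p : ℂ) (l m : ℕ) : ℂ :=
  (-p) ^ (-(m : ℤ)) * q ^ ((m : ℤ) * (l : ℤ) - ((m * (m + 1) / 2 : ℕ) : ℤ)) * qbin q l m

/-- Since `p² = -q⁻¹`, the gauge factor turns the coefficients of `ξ_l` into a vector free
of `p`. -/
lemma xc_gauge {q p : ℂ} (hq0 : q ≠ 0) (hq : ∀ k : ℕ, k ≠ 0 → q ^ k ≠ 1) (hp : p ^ 2 = -q⁻¹)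
    {l m : ℕ} (h : m ≤ l) :
    xc q p l m * p ^ (-(m : ℤ)) = q ^ tri m * qbinom (q ^ 2) l m := by
  have e1 : (-p) ^ (-(m : ℤ)) * p ^ (-(m : ℤ)) = q ^ (m : ℤ) := by
    rw [← mul_zpow, show -p * p = q⁻¹ by linear_combination -hp, inv_zpow, zpow_neg, inv_inv]
  have e2 : q ^ tri m = q ^ (m : ℤ) * q ^ ((m : ℤ) * (l : ℤ) - tri m) *
      q ^ (-((m : ℤ) * (l - m))) := by
    rw [← zpow_add₀ hq0, ← zpow_add₀ hq0]
    congr 1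
    linear_combination two_mul_tri m
  rw [xc, qbin_eq hq0 hq h, e2, ← e1]
  simp only [tri]
  ring

/-- The coefficient of `z^c` in the eigenvalue equation, at `|(l-a) e_n⟩ ⊗ |a e_n⟩`. -/
lemma sum_xc {q p : ℂ} (hq0 : q ≠ 0) (hq : ∀ k : ℕ, k ≠ 0 → q ^ k ≠ 1) (hp : p ^ 2 = -q⁻¹)
    {l a : ℕ} (ha : a ≤ l) (c : ℕ) :
    ∑ m ∈ Finset.range (l + 1),
        xc q p l m * p ^ ((l : ℤ) - m) * p ^ (-(a : ℤ)) * bdv q l m a c =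
      fS q l c / poch q q c * xc q p l (l - a) := by
  have hp0 : p ≠ 0 := by
    rintro rfl
    simp [hq0] at hp
  obtain ⟨b, rfl⟩ : ∃ b, l = b + a := ⟨l - a, by omega⟩
  rw [Nat.add_sub_cancel]
  have hb := xc_gauge hq0 hq hp (Nat.le_add_right b a)
  have h := sum_bdv hq0 hq a b c
  rw [← hb] at h
  have e : xc q p (b + a) b = p ^ (b : ℤ) * (xc q p (b + a) b * p ^ (-(b : ℤ))) := by
    rw [zpow_neg]
    field_simp
  rw [e, mul_left_comm, ← h, Finset.mul_sum]
  refine Finset.sum_congr rfl fun m hm => ?_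
  rw [← xc_gauge hq0 hq hp (Nat.lt_succ_iff.1 (Finset.mem_range.1 hm))]
  have e1 : p ^ (((b + a : ℕ) : ℤ) - m) * p ^ (-(a : ℤ)) = p ^ (b : ℤ) * p ^ (-(m : ℤ)) := by
    rw [← zpow_add₀ hp0, ← zpow_add₀ hp0]
    congr 1
    push_cast
    ring
  linear_combination (xc q p (b + a) m * bdv q (b + a) m a c) * e1

/-! ### Power series in the scalar field -/

lemma cK_mul_mkS (u : ℂ) (f : ℕ → ℂ) : cK u * mkS f = mkS fun c => u * f c := by
  have h : PowerSeries.mk (fun c => u * f c) = PowerSeries.C u * PowerSeries.mk f := by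
    ext c
    simp
  rw [mkS, mkS, h, map_mul, HahnSeries.ofPowerSeries_C]
  rfl

lemma mkS_sum {α : Type} (s : Finset α) (f : α → ℕ → ℂ) :
    ∑ i ∈ s, mkS (f i) = mkS fun c => ∑ i ∈ s, f i c := by
  have h : PowerSeries.mk (fun c => ∑ i ∈ s, f i c) = ∑ i ∈ s, PowerSeries.mk (f i) := by
    ext c
    simp
  simp only [mkS]
  rw [h, map_sum]

lemma zK_eq : zK = HahnSeries.ofPowerSeries ℤ ℂ PowerSeries.X := by
  rw [zK, mkS]
  congr 1
  ext c
  simp [PowerSeries.coeff_X]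

lemma cK_eq (u : ℂ) : cK u = HahnSeries.ofPowerSeries ℤ ℂ (PowerSeries.C u) := by
  rw [HahnSeries.ofPowerSeries_C]
  rfl

lemma one_add_cK_mul_zK_ne (u : ℂ) : 1 + cK u * zK ≠ 0 := by
  rw [zK_eq, cK_eq, ← map_mul, ← map_one (HahnSeries.ofPowerSeries ℤ ℂ), ← map_add]
  intro h
  have h' := HahnSeries.ofPowerSeries_injective (h.trans (map_zero _).symm)
  have := congrArg (PowerSeries.coeff 0) h'
  simp at this

/-- The `N`-th factor of the eigenvalue; on coefficients this is `fS_three_term`. -/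
lemma mkS_fS_succ {q : ℂ} (hq0 : q ≠ 0) (hq : ∀ k : ℕ, k ≠ 0 → q ^ k ≠ 1) (N : ℕ) :
    (mkS fun c => fS q (N + 1) c / poch q q c) * (1 + cK (q ^ (N + 1)) * zK) =
      (mkS fun c => fS q N c / poch q q c) * (zK + cK (q ^ (N + 1))) := by
  rw [zK_eq, cK_eq, mkS, mkS, ← map_mul, ← map_one (HahnSeries.ofPowerSeries ℤ ℂ), ← map_add,
    ← map_add, ← map_mul, ← map_mul]
  congr 1
  rw [mul_add, mul_add, mul_one, mul_left_comm]
  ext c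
  rw [map_add, map_add, PowerSeries.coeff_C_mul, PowerSeries.coeff_mul_C, PowerSeries.coeff_mk,
    PowerSeries.coeff_mk]
  rcases c with _ | c
  · have h := fS_three_term hq0 hq N 0
    simp only [PowerSeries.coeff_zero_mul_X, fS, poch_zero]
    simp only [Nat.cast_zero, mul_zero, zpow_zero, sub_self, zero_mul, add_zero, one_mul] at h
    rw [h, ← zpow_natCast]
    push_cast
    rw [zero_sub]
    ring
  · have h := fS_three_term hq0 hq N (c + 1)
    simp only [PowerSeries.coeff_succ_mul_X, PowerSeries.coeff_mk, fS]
    rw [h, Nat.add_sub_cancel, poch_self_succ]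
    have h1 := poch_self_ne hq c
    have h2 := one_sub_ne hq c
    have e1 : q ^ (2 * ((c + 1 : ℕ) : ℤ)) = q ^ (c + 1) * q ^ (c + 1) := by
      rw [← sq_pow_eq_zpow]; ring
    have e2 : q ^ (((c + 1 : ℕ) : ℤ) - N) = q ^ (c + 1) * (q ^ N)⁻¹ := by
      rw [zpow_sub₀ hq0, zpow_natCast, zpow_natCast, div_eq_mul_inv]
    have e3 : q ^ ((c : ℤ) - N) = q ^ c * (q ^ N)⁻¹ := by
      rw [zpow_sub₀ hq0, zpow_natCast, zpow_natCast, div_eq_mul_inv]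
    have e4 : q ^ (-(N : ℤ)) = (q ^ N)⁻¹ := by rw [zpow_neg, zpow_natCast]
    have e5 : q ^ ((N : ℤ) + 1) = q ^ (N + 1) := by rw [← zpow_natCast]; push_cast; rfl
    have h3 : q ^ N ≠ 0 := pow_ne_zero _ hq0
    rw [e1, e2, e3, e4, e5, zpow_natCast]
    field_simp
    ring

lemma mkS_fS {q : ℂ} (hq0 : q ≠ 0) (hq : ∀ k : ℕ, k ≠ 0 → q ^ k ≠ 1) (N : ℕ) :
    (mkS fun c => fS q N c / poch q q c) =
      (mkS fun c => poch (q ^ 2) (q ^ 2) c / (poch q q c * poch q q c)) *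
        ∏ j ∈ Finset.range N, (zK + cK (q ^ (j + 1))) / (1 + cK (q ^ (j + 1)) * zK) := by
  induction N with
  | zero => simp [fS, div_div]
  | succ N ih =>
    rw [Finset.prod_range_succ, ← mul_assoc, ← ih, ← mul_div_assoc,
      eq_div_iff (one_add_cK_mul_zK_ne _), mkS_fS_succ hq0 hq]

/-! ### Operators on basis vectors -/

lemma mkEnd_single (L : Type) [Field L] {α : Type} (v : α → (α →₀ L)) (m : α) :
    mkEnd L v (Finsupp.single m 1) = v m := by
  simp [mkEnd]

lemma Pop_single {n : ℕ} (ε : Fin n → Bool) (i j : Idx ε) :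
    Pop K ε (Finsupp.single (i, j) 1) = Finsupp.single (j, i) 1 := by
  rw [Pop, mkEnd_single]

lemma tens_single {n : ℕ} {ε : Fin n → Bool} (i j : Idx ε) (u v : K) :
    tens K (u • Finsupp.single i 1) (v • Finsupp.single j 1) =
      (u * v) • Finsupp.single (i, j) (1 : K) := by
  simp [tens]

lemma opT_right_single {n : ℕ} (ε : Fin n → Bool) (p : ℂ) (s : ℤ) (i j : Idx ε) :
    opT K LinearMap.id (Kdiag p ε s) (Finsupp.single (i, j) 1) =
      cK (p ^ (s * ∑ t, (j.1 t : ℤ))) • Finsupp.single (i, j) 1 := by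
  have h := tens_single i j 1 (cK (p ^ (s * ∑ t, (j.1 t : ℤ))))
  rw [one_smul, one_mul] at h
  rw [opT, mkEnd_single, Kdiag, mkEnd_single, LinearMap.id_apply, h]

lemma opT_left_single {n : ℕ} (ε : Fin n → Bool) (p : ℂ) (s : ℤ) (i j : Idx ε) :
    opT K (Kdiag p ε s) LinearMap.id (Finsupp.single (i, j) 1) =
      cK (p ^ (s * ∑ t, (i.1 t : ℤ))) • Finsupp.single (i, j) 1 := by
  have h := tens_single i j (cK (p ^ (s * ∑ t, (i.1 t : ℤ)))) 1
  rw [one_smul, mul_one] at h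
  rw [opT, mkEnd_single, Kdiag, mkEnd_single, LinearMap.id_apply, h]

lemma kk_cast {n : ℕ} (ε : Fin n → Bool) (a b : Idx ε) :
    kk K ε (fun t => (a.1 t : ℤ)) (fun t => (b.1 t : ℤ)) = Finsupp.single (a, b) 1 := by
  have h : ((∀ t, 0 ≤ (a.1 t : ℤ)) ∧ Ok ε (fun t => (a.1 t : ℤ).toNat)) ∧
      ((∀ t, 0 ≤ (b.1 t : ℤ)) ∧ Ok ε (fun t => (b.1 t : ℤ).toNat)) := by
    simp only [Int.toNat_natCast]
    exact ⟨⟨fun t => Int.natCast_nonneg _, a.2⟩, ⟨fun t => Int.natCast_nonneg _, b.2⟩⟩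
  rw [kk, dif_pos h]
  rfl

/-! ### The boundary operator on vectors supported on the last component -/

/-- The label `m e_n` of `𝒲`; the hypothesis says that the last component is bosonic. -/
def eN {n : ℕ} {ε : Fin n → Bool} (h : ∀ t, ε t = true → (t : ℕ) ≠ n - 1) (m : ℕ) : Idx ε :=
  ⟨fun t => if (t : ℕ) = n - 1 then m else 0, fun t ht => by simp [h t ht]⟩

lemma eN_last {n : ℕ} {ε : Fin n → Bool} (h : ∀ t, ε t = true → (t : ℕ) ≠ n - 1) (m : ℕ)
    {t : Fin n} (ht : (t : ℕ) = n - 1) : (eN h m).1 t = m := if_pos ht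

lemma eN_of_ne {n : ℕ} {ε : Fin n → Bool} (h : ∀ t, ε t = true → (t : ℕ) ≠ n - 1) (m : ℕ)
    {t : Fin n} (ht : (t : ℕ) ≠ n - 1) : (eN h m).1 t = 0 := if_neg ht

lemma sum_eN {n : ℕ} [NeZero n] {ε : Fin n → Bool} (h : ∀ t, ε t = true → (t : ℕ) ≠ n - 1)
    (m : ℕ) : ∑ t, ((eN h m).1 t : ℤ) = m := by
  have hn := Nat.pos_of_ne_zero (NeZero.ne n)
  rw [Finset.sum_eq_single (⟨n - 1, by omega⟩ : Fin n), eN_last h m rfl]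
  · intro t _ ht
    rw [eN_of_ne h m fun h' => ht (Fin.ext h'), Nat.cast_zero]
  · simp

lemma Sg_zero {q : ℂ} (hq : ∀ k : ℕ, k ≠ 0 → q ^ k ≠ 1) (e : Bool) (c k : ℕ) :
    Sg q e 0 0 c 0 0 k = if c = k then 1 else 0 := by
  have h := poch_self_ne (sq_not_root hq) c
  rcases e with _ | _
  · simp [Sg, R3, qbinom, poch_zero, h]
  · simp [Sg, L3]

/-- On labels supported on the last component all `L` and `R` factors but the last one force
`c₀ = ⋯ = c_{n-1}`, and the last one fixes `c_n` by its conservation law. A single term of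
the sum defining the matrix element survives. -/
lemma bdCoef_eN {q : ℂ} (hq : ∀ k : ℕ, k ≠ 0 → q ^ k ≠ 1) {n : ℕ} [NeZero n]
    {ε : Fin n → Bool} (h : ∀ t, ε t = true → (t : ℕ) ≠ n - 1) {l m a : ℕ} (hm : m ≤ l)
    (ha : a ≤ l) (c0 : ℕ) :
    bdCoef q ε (eN h a).1 (fun t => (eN h m).1 t + (eN h (l - m)).1 t - (eN h a).1 t)
      (eN h m).1 (eN h (l - m)).1 c0 = bdv q l m a c0 := by
  have hn := Nat.pos_of_ne_zero (NeZero.ne n)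
  set t0 : Fin n := ⟨n - 1, by omega⟩ with ht0
  have hε0 : ε t0 = false := by
    by_contra hε
    exact h t0 (by simpa using hε) rfl
  -- The factor at a component below the last one forces equal neighbouring labels.
  have hlow (c : Fin (n + 1) → ℕ) (t : Fin n) (ht : t ≠ t0) :
      Sg q (ε t) ((eN h a).1 t) ((eN h m).1 t + (eN h (l - m)).1 t - (eN h a).1 t)
        (c t.castSucc) ((eN h m).1 t) ((eN h (l - m)).1 t) (c t.succ) =
      if c t.castSucc = c t.succ then 1 else 0 := by
    have ht' : (t : ℕ) ≠ n - 1 := fun h' => ht (Fin.ext h')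
    rw [eN_of_ne h _ ht', eN_of_ne h _ ht', eN_of_ne h _ ht']
    exact Sg_zero hq _ _ _
  have htop (c : Fin (n + 1) → ℕ) :
      Sg q (ε t0) ((eN h a).1 t0) ((eN h m).1 t0 + (eN h (l - m)).1 t0 - (eN h a).1 t0)
        (c t0.castSucc) ((eN h m).1 t0) ((eN h (l - m)).1 t0) (c t0.succ) =
      R3 q a (l - a) (c t0.castSucc) m (l - m) (c t0.succ) := by
    rw [eN_last h _ rfl, eN_last h _ rfl, eN_last h _ rfl, hε0, show m + (l - m) = l by omega]
    rfl
  have hlast : t0.succ = Fin.last n := by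
    ext
    simp [ht0]
    omega
  set cs : Fin (n + 1) → ℕ := fun t => if t = Fin.last n then c0 + m - a else c0 with hcs
  have hcs0 (t : Fin n) : cs t.castSucc = c0 := if_neg (Fin.castSucc_lt_last t).ne
  have hcsl : cs (Fin.last n) = c0 + m - a := if_pos rfl
  have h00 : (0 : Fin (n + 1)) = (⟨0, hn⟩ : Fin n).castSucc := rfl
  rw [bdCoef, finsum_eq_single _ cs]
  · rw [if_pos (by rw [h00, hcs0]), Finset.prod_eq_single t0, htop, hlast, hcs0, hcsl, bdv]
    · intro t _ ht
      rw [hlow cs t ht, hcs0, if_pos]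
      have : t.succ = (⟨t + 1, by
        have : (t : ℕ) ≠ n - 1 := fun h' => ht (Fin.ext h')
        omega⟩ : Fin n).castSucc := rfl
      rw [this, hcs0]
    · simp
  · intro c hc
    by_contra hne
    obtain ⟨h0, hne⟩ := ite_ne_right_iff.1 hne
    have hprod := right_ne_zero_of_mul hne
    have hfac := Finset.prod_ne_zero_iff.1 hprod
    have hstep (t : Fin n) (ht : t ≠ t0) : c t.castSucc = c t.succ := by
      have := hfac t (Finset.mem_univ t)
      rw [hlow c t ht] at this
      by_contra h'
      exact this (if_neg h')
    have hconst (k : ℕ) : ∀ hk : k < n, c (⟨k, hk⟩ : Fin n).castSucc = c0 := by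
      induction k with
      | zero => intro hk; rw [← h0]; rfl
      | succ k ih =>
        intro hk
        rw [← ih (by omega)]
        refine (hstep ⟨k, by omega⟩ fun h' => ?_).symm
        have := congrArg Fin.val h'
        simp [ht0] at this
        omega
    have htopne := hfac t0 (Finset.mem_univ t0)
    rw [htop, hconst, hlast, R3] at htopne
    have hcons : a + (l - a) = m + (l - m) ∧ l - a + c0 = l - m + c (Fin.last n) := by
      by_contra h'
      exact htopne (by rw [if_neg h', zero_mul])
    refine hc (funext fun t => ?_)
    refine Fin.lastCases ?_ (fun t => ?_) t
    · rw [hcsl]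
      omega
    · rw [hcs0]
      exact hconst t t.2

lemma S0bd_single {q : ℂ} (hq : ∀ k : ℕ, k ≠ 0 → q ^ k ≠ 1) {n : ℕ} [NeZero n]
    {ε : Fin n → Bool} (h : ∀ t, ε t = true → (t : ℕ) ≠ n - 1) {l m : ℕ} (hm : m ≤ l) :
    S0bd q ε (Finsupp.single (eN h m, eN h (l - m)) 1) =
      ∑ a ∈ Finset.range (l + 1), mkS (bdv q l m a) •
        Finsupp.single (eN h a, eN h (l - a)) (1 : K) := by
  have hn := Nat.pos_of_ne_zero (NeZero.ne n)
  have hadd (t : Fin n) : (eN h m).1 t + (eN h (l - m)).1 t = (eN h l).1 t := by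
    by_cases ht : (t : ℕ) = n - 1
    · rw [eN_last h _ ht, eN_last h _ ht, eN_last h _ ht]; omega
    · rw [eN_of_ne h _ ht, eN_of_ne h _ ht, eN_of_ne h _ ht]
  rw [S0bd, mkEnd_single]
  refine (Finset.sum_bij' (fun a _ => (eN h a).1) (fun a _ => a ⟨n - 1, by omega⟩)
    ?_ ?_ ?_ ?_ ?_).symm
  · intro a ha
    rw [Finset.mem_range] at ha
    rw [Fintype.mem_piFinset]
    intro t
    rw [Finset.mem_range, hadd]
    by_cases ht : (t : ℕ) = n - 1
    · rw [eN_last h _ ht, eN_last h _ ht]; omega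
    · rw [eN_of_ne h _ ht, eN_of_ne h _ ht]; omega
  · intro a ha
    have := Fintype.mem_piFinset.1 ha ⟨n - 1, by omega⟩
    rwa [hadd, eN_last h l rfl] at this
  · intro a _
    exact eN_last h a rfl
  · intro a ha
    funext t
    have hr := Fintype.mem_piFinset.1 ha t
    rw [Finset.mem_range, hadd] at hr
    by_cases ht : (t : ℕ) = n - 1
    · rw [eN_last h _ ht]
      congr 1
      exact Fin.ext ht.symm
    · rw [eN_of_ne h _ ht] at hr ⊢
      omega
  · intro a ha
    have ha' : a ≤ l := Nat.lt_succ_iff.1 (Finset.mem_range.1 ha)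
    have e : (fun t => ((eN h m).1 t : ℤ) + ((eN h (l - m)).1 t : ℤ) - ((eN h a).1 t : ℤ)) =
        fun t => ((eN h (l - a)).1 t : ℤ) := by
      funext t
      by_cases ht : (t : ℕ) = n - 1
      · simp only [eN_last h _ ht]; omega
      · simp only [eN_of_ne h _ ht]; rfl
    have e' : bdCoef q ε (eN h a).1
        (fun t => (eN h m).1 t + (eN h (l - m)).1 t - (eN h a).1 t)
        (eN h m).1 (eN h (l - m)).1 = bdv q l m a :=
      funext fun c0 => bdCoef_eN hq h hm ha' c0
    rw [e, e', kk_cast]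

lemma xiB_eq (q p : ℂ) {n : ℕ} {ε : Fin n → Bool}
    (h : ∀ t, ε t = true → (t : ℕ) ≠ n - 1) (l : ℕ) :
    xiB q p cK ε l = ∑ m ∈ Finset.range (l + 1),
      cK (xc q p l m) • Finsupp.single (eN h m, eN h (l - m)) (1 : K) := by
  refine Finset.sum_congr rfl fun m hm => ?_
  have hm' : m ≤ l := Nat.lt_succ_iff.1 (Finset.mem_range.1 hm)
  rw [← kk_cast, xc]
  congr 2
  · funext t
    by_cases ht : (t : ℕ) = n - 1
    · rw [eN_last h _ ht, if_pos ht]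
    · rw [eN_of_ne h _ ht, if_neg ht]; rfl
  · funext t
    by_cases ht : (t : ℕ) = n - 1
    · rw [eN_last h _ ht, if_pos ht]; omega
    · rw [eN_of_ne h _ ht, if_neg ht]; rfl

/-! ### The eigenvector -/

lemma smul_smul_K {n : ℕ} {ε : Fin n → Bool} (u v : K) (x : WW K ε) :
    u • v • x = (u * v) • x := by
  ext i
  simp only [Finsupp.smul_apply, smul_eq_mul, mul_assoc]

lemma sum_smul_K {n : ℕ} {ε : Fin n → Bool} (s : Finset ℕ) (f : ℕ → K) (x : WW K ε) :
    ∑ i ∈ s, f i • x = (∑ i ∈ s, f i) • x := by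
  ext i
  simp only [Finsupp.smul_apply, smul_eq_mul, Finset.sum_mul, Finsupp.finsetSum_apply]

/-- the type-B singular vector `ξ_l` is an eigenvector of
`P ∘ S̃₀^{1,1}(z)` with eigenvalue `φ(z) ∏_{j=1}^l (z+q^j)/(1+q^j z)`. -/
theorem statement_19 (q qh : ℂ) (hq0 : q ≠ 0) (hqh : qh ^ 2 = q)
    (hq : ∀ k : ℕ, k ≠ 0 → q ^ k ≠ 1)
    (n κ : ℕ) [NeZero n] (hn : 2 ≤ n) (hκ1 : 1 ≤ κ) (hκ2 : κ ≤ n - 1)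
    (ε : Fin n → Bool) (hε : ε = fun t : Fin n => decide ((t : ℕ) < κ)) (l : ℕ) :
    Pop K ε (S0bdT q (Complex.I * qh⁻¹) ε (xiB q (Complex.I * qh⁻¹) cK ε l))
      = ((mkS fun c => poch (q ^ 2) (q ^ 2) c / (poch q q c * poch q q c)) *
          ∏ j ∈ Finset.range l, (zK + cK (q ^ (j + 1))) / (1 + cK (q ^ (j + 1)) * zK)) •
        xiB q (Complex.I * qh⁻¹) cK ε l := by
  have h : ∀ t, ε t = true → (t : ℕ) ≠ n - 1 := by
    intro t ht
    rw [hε] at ht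
    have := of_decide_eq_true ht
    omega
  have hp : (Complex.I * qh⁻¹) ^ 2 = -q⁻¹ := by
    rw [mul_pow, Complex.I_sq, inv_pow, hqh, neg_one_mul]
  generalize Complex.I * qh⁻¹ = p at hp ⊢
  have hT (m : ℕ) (hm : m ∈ Finset.range (l + 1)) :
      Pop K ε (S0bdT q p ε (Finsupp.single (eN h m, eN h (l - m)) 1)) =
        ∑ a ∈ Finset.range (l + 1),
          (mkS fun c => p ^ ((l : ℤ) - m) * (p ^ (-(a : ℤ)) * bdv q l m a c)) •
            Finsupp.single (eN h (l - a), eN h a) (1 : K) := by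
    have hm' : m ≤ l := Nat.lt_succ_iff.1 (Finset.mem_range.1 hm)
    rw [S0bdT, LinearMap.comp_apply, LinearMap.comp_apply, opT_right_single, map_smul,
      S0bd_single hq h hm', map_smul, map_smul, map_sum, map_sum, Finset.smul_sum]
    refine Finset.sum_congr rfl fun a _ => ?_
    rw [map_smul, map_smul, opT_left_single, map_smul, Pop_single, smul_smul_K, smul_smul_K, sum_eN,
      sum_eN, mul_assoc, mul_comm (mkS _), cK_mul_mkS, cK_mul_mkS, Nat.cast_sub hm',
      one_mul, neg_one_mul]
  -- The flip sends the output label `a` to `|(l-a) e_n⟩ ⊗ |a e_n⟩`, so the right-hand side is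
  -- summed in the reversed order before the coefficients are compared.
  rw [← mkS_fS hq0 hq, xiB_eq q p h, map_sum, map_sum, Finset.smul_sum,
    ← Finset.sum_range_reflect (fun m => (mkS _) • cK (xc q p l m) • _)]
  have hT' (m : ℕ) (hm : m ∈ Finset.range (l + 1)) :
      Pop K ε (S0bdT q p ε (cK (xc q p l m) • Finsupp.single (eN h m, eN h (l - m)) 1)) =
        ∑ a ∈ Finset.range (l + 1),
          (mkS fun c => xc q p l m * p ^ ((l : ℤ) - m) * p ^ (-(a : ℤ)) * bdv q l m a c) •
            Finsupp.single (eN h (l - a), eN h a) (1 : K) := by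
    rw [map_smul, map_smul, hT m hm, Finset.smul_sum]
    refine Finset.sum_congr rfl fun a _ => ?_
    rw [smul_smul_K, cK_mul_mkS]
    simp only [mul_assoc]
  rw [Finset.sum_congr rfl hT', Finset.sum_comm]
  refine Finset.sum_congr rfl fun a ha => ?_
  have ha' : a ≤ l := Nat.lt_succ_iff.1 (Finset.mem_range.1 ha)
  have e1 : l + 1 - 1 - a = l - a := by omega
  have e2 : l - (l - a) = a := by omega
  rw [sum_smul_K, mkS_sum, e1, e2, smul_smul_K, mul_comm (mkS _), cK_mul_mkS]
  congr 2
  funext c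
  rw [sum_xc hq0 hq hp ha' c, mul_comm]

end TetraGQ
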